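/- The operation ↓ is functorial on Int(Rel): for all Int(Rel) morphisms R : (A⁺,A⁻)→(B⁺,B⁻) and S : (B⁺,B⁻)→(C⁺,C⁻), one has ↓(S∘R) = (↓S)∘(↓R) with respect to the Int(Rel) composition, and ↓Id = Id. -/

import Mathlib

/-! The point is that `↓R` is the direct sum of `R` with the identity on `(1, 1)`. The execution
formula is built from relational composition, union and reflexive–transitive closure, and each of
these commutes with disjoint sums; for the closure, this is because no step of `h ⊕ k` leaves its
summand. Hence the direct sum is a bifunctor on Int(Rel), and fixing an identity in one argument
leaves a functor. -/

namespace IntRel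

/-- A relation from `α` to `β`. -/
abbrev Rel' (α β : Type) : Type := α → β → Prop

/-- Right-to-left composition of relations: `(rcomp S R) a c` iff `∃ b, R a b ∧ S b c`. -/
def rcomp {α β γ : Type} (S : Rel' β γ) (R : Rel' α β) : Rel' α γ :=
  fun a c => ∃ b, R a b ∧ S b c

/-- Reflexive–transitive closure of an endorelation. -/
def rstar {α : Type} (h : Rel' α α) : Rel' α α := Relation.ReflTransGen h

/-- Image `R[X]` of a subset under a relation. -/
def img {α β : Type} (R : Rel' α β) (X : Set α) : Set β := {b | ∃ a ∈ X, R a b}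

/-- Preimage `[Y]R` of a subset under a relation. -/
def pre {α β : Type} (R : Rel' α β) (Y : Set β) : Set α := {a | ∃ b ∈ Y, R a b}

/-- Identity relation. -/
def idRel (α : Type) : Rel' α α := fun a b => a = b

/-- Empty relation. -/
def emptyRel (α β : Type) : Rel' α β := fun _ _ => False

/-- Disjoint union of relations, acting componentwise. -/
def sumRel {α β γ δ : Type} (f : Rel' α γ) (g : Rel' β δ) : Rel' (α ⊕ β) (γ ⊕ δ) :=
  fun x y =>
    match x, y with
    | .inl a, .inl c => f a c
    | .inr b, .inr d => g b d
    | _, _ => False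

/-- Disjoint union of subsets. -/
def sumSet {α β : Type} (X : Set α) (Y : Set β) : Set (α ⊕ β) :=
  fun z => match z with
    | .inl a => a ∈ X
    | .inr b => b ∈ Y

variable {Ap Am Bp Bm Cp Cm Dp Dm : Type}

/-- Component `R₁₂ : A⁺ → B⁺` of an Int(Rel) morphism. -/
def c12 (R : Rel' (Ap ⊕ Bm) (Bp ⊕ Am)) : Rel' Ap Bp := fun a b => R (.inl a) (.inl b)
/-- Component `R₁₁ : A⁺ → A⁻` of an Int(Rel) morphism. -/
def c11 (R : Rel' (Ap ⊕ Bm) (Bp ⊕ Am)) : Rel' Ap Am := fun a a' => R (.inl a) (.inr a')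
/-- Component `R₂₂ : B⁻ → B⁺` of an Int(Rel) morphism. -/
def c22 (R : Rel' (Ap ⊕ Bm) (Bp ⊕ Am)) : Rel' Bm Bp := fun b' b => R (.inr b') (.inl b)
/-- Component `R₂₁ : B⁻ → A⁻` of an Int(Rel) morphism. -/
def c21 (R : Rel' (Ap ⊕ Bm) (Bp ⊕ Am)) : Rel' Bm Am := fun b' a' => R (.inr b') (.inr a')

/-- Composition in Int(Rel), given by the star (execution) formula. -/
def IntComp (S : Rel' (Bp ⊕ Cm) (Cp ⊕ Bm)) (R : Rel' (Ap ⊕ Bm) (Bp ⊕ Am)) :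
    Rel' (Ap ⊕ Cm) (Cp ⊕ Am) :=
  fun x y =>
    match x, y with
    | .inl a, .inl c =>
        rcomp (c12 S) (rcomp (rstar (rcomp (c22 R) (c11 S))) (c12 R)) a c
    | .inl a, .inr a' =>
        c11 R a a' ∨
          rcomp (c21 R) (rcomp (c11 S) (rcomp (rstar (rcomp (c22 R) (c11 S))) (c12 R))) a a'
    | .inr c', .inl c =>
        c22 S c' c ∨
          rcomp (c12 S) (rcomp (c22 R) (rcomp (rstar (rcomp (c11 S) (c22 R))) (c21 S))) c' c
    | .inr c', .inr a' =>
        rcomp (c21 R) (rcomp (rstar (rcomp (c11 S) (c22 R))) (c21 S)) c' a'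

/-- The identity Int(Rel) morphism on `(A⁺, A⁻)`. -/
def IdInt (Ap Am : Type) : Rel' (Ap ⊕ Am) (Ap ⊕ Am) :=
  fun x y =>
    match x, y with
    | .inl a, .inl a2 => a = a2
    | .inr a', .inr a2 => a' = a2
    | _, _ => False

/-- `R` is a positive map between the indicated multipointed objects. -/
def IsPos (R : Rel' (Ap ⊕ Bm) (Bp ⊕ Am)) (mAp : Set Ap) (mAm : Set Am)
    (mBp : Set Bp) (mBm : Set Bm) : Prop :=
  pre (c12 R) mBp = mAp ∧ img (c21 R) mBm = mAm ∧
    pre (c22 R) mBp = ∅ ∧ img (c22 R) mBm = ∅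

/-- `R` is a negative map between the indicated multipointed objects. -/
def IsNeg (R : Rel' (Ap ⊕ Bm) (Bp ⊕ Am)) (mAp : Set Ap) (mAm : Set Am)
    (mBp : Set Bp) (mBm : Set Bm) : Prop :=
  img (c12 R) mAp = mBp ∧ pre (c21 R) mAm = mBm ∧
    pre (c11 R) mAm = ∅ ∧ img (c11 R) mAp = ∅


/-- The Int(Rel) morphism `↓R`: `(↓R)₁₂ = R₁₂ ⊕ {(⋆,⋆)}`, `(↓R)₂₁ = R₂₁ ⊕ {(⋆,⋆)}`,
`(↓R)₁₁ = R₁₁` embedded, `(↓R)₂₂ = R₂₂` embedded. -/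
def downM (R : Rel' (Ap ⊕ Bm) (Bp ⊕ Am)) :
    Rel' ((Ap ⊕ Unit) ⊕ (Bm ⊕ Unit)) ((Bp ⊕ Unit) ⊕ (Am ⊕ Unit)) :=
  fun x y =>
    match x, y with
    | .inl (.inl a), .inl (.inl b) => R (.inl a) (.inl b)
    | .inl (.inr _), .inl (.inr _) => True
    | .inl (.inl a), .inr (.inl a') => R (.inl a) (.inr a')
    | .inr (.inl b'), .inl (.inl b) => R (.inr b') (.inl b)
    | .inr (.inl b'), .inr (.inl a') => R (.inr b') (.inr a')
    | .inr (.inr _), .inr (.inr _) => True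
    | _, _ => False

section Rel

variable {α β γ δ ε ζ : Type}

theorem idRel_rcomp (R : Rel' α β) : rcomp (idRel β) R = R :=
  Relation.comp_eq

theorem rcomp_idRel (R : Rel' α β) : rcomp R (idRel α) = R :=
  Relation.eq_comp

theorem emptyRel_rcomp (R : Rel' α β) : rcomp (emptyRel β γ) R = emptyRel α γ := by
  ext a c
  simp [rcomp, emptyRel]

theorem rcomp_emptyRel (S : Rel' β γ) : rcomp S (emptyRel α β) = emptyRel α γ := by
  ext a c
  simp [rcomp, emptyRel]

theorem sup_emptyRel (R : Rel' α β) : R ⊔ emptyRel α β = R :=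
  sup_bot_eq R

theorem emptyRel_sup (R : Rel' α β) : emptyRel α β ⊔ R = R :=
  bot_sup_eq R

theorem rstar_emptyRel (α : Type) : rstar (emptyRel α α) = idRel α := by
  ext a b
  refine ⟨fun hab => ?_, fun hab => hab ▸ Relation.ReflTransGen.refl⟩
  obtain hab | ⟨_, _, hstep⟩ := Relation.ReflTransGen.cases_tail hab
  · exact hab.symm
  · exact hstep.elim

theorem sumRel_idRel (α β : Type) : sumRel (idRel α) (idRel β) = idRel (α ⊕ β) := by
  ext (a | b) (a' | b') <;> simp [sumRel, idRel]

theorem sumRel_emptyRel (α β γ δ : Type) :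
    sumRel (emptyRel α γ) (emptyRel β δ) = emptyRel (α ⊕ β) (γ ⊕ δ) := by
  ext (a | b) (c | d) <;> rfl

theorem sumRel_sup (f f' : Rel' α γ) (g g' : Rel' β δ) :
    sumRel (f ⊔ f') (g ⊔ g') = sumRel f g ⊔ sumRel f' g' := by
  ext (a | b) (c | d) <;> simp [sumRel]

theorem sumRel_rcomp (S : Rel' γ ε) (R : Rel' α γ) (S' : Rel' δ ζ) (R' : Rel' β δ) :
    sumRel (rcomp S R) (rcomp S' R') = rcomp (sumRel S S') (sumRel R R') := by
  ext (a | b) (e | z) <;> simp [sumRel, rcomp]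

theorem sumRel_rstar_of_rstar_sumRel {h : Rel' α α} {k : Rel' β β} {x y : α ⊕ β}
    (hxy : rstar (sumRel h k) x y) : sumRel (rstar h) (rstar k) x y := by
  induction hxy with
  | refl => cases x <;> exact Relation.ReflTransGen.refl
  | @tail y z _ hyz ih =>
    match x, y, z with
    | .inl _, .inl _, .inl _ | .inr _, .inr _, .inr _ => exact Relation.ReflTransGen.tail ih hyz
    | .inl _, .inr _, _ | .inr _, .inl _, _ => exact ih.elim
    | _, .inl _, .inr _ | _, .inr _, .inl _ => exact hyz.elim

theorem rstar_sumRel_of_sumRel_rstar {h : Rel' α α} {k : Rel' β β} {x y : α ⊕ β}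
    (hxy : sumRel (rstar h) (rstar k) x y) : rstar (sumRel h k) x y :=
  match x, y with
  | .inl _, .inl _ => Relation.ReflTransGen.lift Sum.inl (fun _ _ hstep => hstep) _ _ hxy
  | .inr _, .inr _ => Relation.ReflTransGen.lift Sum.inr (fun _ _ hstep => hstep) _ _ hxy
  | .inl _, .inr _ | .inr _, .inl _ => hxy.elim

theorem sumRel_rstar (h : Rel' α α) (k : Rel' β β) :
    sumRel (rstar h) (rstar k) = rstar (sumRel h k) := by
  ext x y
  exact ⟨rstar_sumRel_of_sumRel_rstar, sumRel_rstar_of_rstar_sumRel⟩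

end Rel

section Components

theorem components_ext {R R' : Rel' (Ap ⊕ Bm) (Bp ⊕ Am)} (h₁₁ : c11 R = c11 R')
    (h₁₂ : c12 R = c12 R') (h₂₁ : c21 R = c21 R') (h₂₂ : c22 R = c22 R') : R = R' := by
  ext (a | b') (b | a')
  · exact iff_of_eq (congrFun₂ h₁₂ a b)
  · exact iff_of_eq (congrFun₂ h₁₁ a a')
  · exact iff_of_eq (congrFun₂ h₂₂ b' b)
  · exact iff_of_eq (congrFun₂ h₂₁ b' a')

theorem c11_idInt (Ap Am : Type) : c11 (IdInt Ap Am) = emptyRel Ap Am := rfl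

theorem c12_idInt (Ap Am : Type) : c12 (IdInt Ap Am) = idRel Ap := rfl

theorem c21_idInt (Ap Am : Type) : c21 (IdInt Ap Am) = idRel Am := rfl

theorem c22_idInt (Ap Am : Type) : c22 (IdInt Ap Am) = emptyRel Am Ap := rfl

variable (S : Rel' (Bp ⊕ Cm) (Cp ⊕ Bm)) (R : Rel' (Ap ⊕ Bm) (Bp ⊕ Am))

theorem c11_intComp :
    c11 (IntComp S R) = c11 R ⊔
      rcomp (c21 R) (rcomp (c11 S) (rcomp (rstar (rcomp (c22 R) (c11 S))) (c12 R))) := rfl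

theorem c12_intComp :
    c12 (IntComp S R) = rcomp (c12 S) (rcomp (rstar (rcomp (c22 R) (c11 S))) (c12 R)) := rfl

theorem c21_intComp :
    c21 (IntComp S R) = rcomp (c21 R) (rcomp (rstar (rcomp (c11 S) (c22 R))) (c21 S)) := rfl

theorem c22_intComp :
    c22 (IntComp S R) = c22 S ⊔
      rcomp (c12 S) (rcomp (c22 R) (rcomp (rstar (rcomp (c11 S) (c22 R))) (c21 S))) := rfl

end Components

theorem idInt_intComp (R : Rel' (Ap ⊕ Bm) (Bp ⊕ Am)) : IntComp (IdInt Bp Bm) R = R := by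
  apply components_ext
  · rw [c11_intComp, c11_idInt, emptyRel_rcomp, rcomp_emptyRel, sup_emptyRel]
  · rw [c12_intComp, c12_idInt, c11_idInt, rcomp_emptyRel, rstar_emptyRel, idRel_rcomp,
      idRel_rcomp]
  · rw [c21_intComp, c21_idInt, c11_idInt, emptyRel_rcomp, rstar_emptyRel, idRel_rcomp,
      rcomp_idRel]
  · rw [c22_intComp, c12_idInt, c21_idInt, c22_idInt, c11_idInt, emptyRel_rcomp, rstar_emptyRel,
      idRel_rcomp, idRel_rcomp, rcomp_idRel, emptyRel_sup]

section IntSum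

variable {Xp Xm Yp Ym Zp Zm : Type}

/-- The direct sum of Int(Rel) morphisms `(A⁺, A⁻) → (B⁺, B⁻)` and `(X⁺, X⁻) → (Y⁺, Y⁻)`, a
morphism `(A⁺ ⊕ X⁺, A⁻ ⊕ X⁻) → (B⁺ ⊕ Y⁺, B⁻ ⊕ Y⁻)` whose four components are the disjoint unions
of the components of the summands. -/
def IntSum (R : Rel' (Ap ⊕ Bm) (Bp ⊕ Am)) (Q : Rel' (Xp ⊕ Ym) (Yp ⊕ Xm)) :
    Rel' ((Ap ⊕ Xp) ⊕ (Bm ⊕ Ym)) ((Bp ⊕ Yp) ⊕ (Am ⊕ Xm)) :=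
  fun x y =>
    match x, y with
    | .inl a, .inl b => sumRel (c12 R) (c12 Q) a b
    | .inl a, .inr a' => sumRel (c11 R) (c11 Q) a a'
    | .inr b', .inl b => sumRel (c22 R) (c22 Q) b' b
    | .inr b', .inr a' => sumRel (c21 R) (c21 Q) b' a'

section

variable (R : Rel' (Ap ⊕ Bm) (Bp ⊕ Am)) (Q : Rel' (Xp ⊕ Ym) (Yp ⊕ Xm))

theorem c11_intSum : c11 (IntSum R Q) = sumRel (c11 R) (c11 Q) := rfl

theorem c12_intSum : c12 (IntSum R Q) = sumRel (c12 R) (c12 Q) := rfl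

theorem c21_intSum : c21 (IntSum R Q) = sumRel (c21 R) (c21 Q) := rfl

theorem c22_intSum : c22 (IntSum R Q) = sumRel (c22 R) (c22 Q) := rfl

end

theorem intSum_idInt (Ap Am Xp Xm : Type) :
    IntSum (IdInt Ap Am) (IdInt Xp Xm) = IdInt (Ap ⊕ Xp) (Am ⊕ Xm) :=
  components_ext (sumRel_emptyRel Ap Xp Am Xm) (sumRel_idRel Ap Xp) (sumRel_idRel Am Xm)
    (sumRel_emptyRel Am Xm Ap Xp)

theorem intSum_intComp (S : Rel' (Bp ⊕ Cm) (Cp ⊕ Bm)) (R : Rel' (Ap ⊕ Bm) (Bp ⊕ Am))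
    (P : Rel' (Yp ⊕ Zm) (Zp ⊕ Ym)) (Q : Rel' (Xp ⊕ Ym) (Yp ⊕ Xm)) :
    IntSum (IntComp S R) (IntComp P Q) = IntComp (IntSum S P) (IntSum R Q) := by
  apply components_ext
  · simp only [c11_intComp, c11_intSum, c12_intSum, c21_intSum, c22_intSum, sumRel_sup,
      sumRel_rcomp, sumRel_rstar]
  · simp only [c12_intComp, c11_intSum, c12_intSum, c22_intSum, sumRel_rcomp, sumRel_rstar]
  · simp only [c21_intComp, c11_intSum, c21_intSum, c22_intSum, sumRel_rcomp, sumRel_rstar]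
  · simp only [c22_intComp, c11_intSum, c12_intSum, c21_intSum, c22_intSum, sumRel_sup,
      sumRel_rcomp, sumRel_rstar]

theorem downM_eq_intSum (R : Rel' (Ap ⊕ Bm) (Bp ⊕ Am)) :
    downM R = IntSum R (IdInt Unit Unit) := by
  apply components_ext <;> ext (_ | _) (_ | _) <;>
    simp [downM, IntSum, sumRel, IdInt, c11, c12, c21, c22]

end IntSum

theorem down_functorial_general (Xp Xm : Type) (R : Rel' (Ap ⊕ Bm) (Bp ⊕ Am))
    (S : Rel' (Bp ⊕ Cm) (Cp ⊕ Bm)) :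
    IntSum (IntComp S R) (IdInt Xp Xm) =
        IntComp (IntSum S (IdInt Xp Xm)) (IntSum R (IdInt Xp Xm)) ∧
      IntSum (IdInt Ap Am) (IdInt Xp Xm) = IdInt (Ap ⊕ Xp) (Am ⊕ Xm) := by
  refine ⟨?_, intSum_idInt Ap Am Xp Xm⟩
  rw [← intSum_intComp, idInt_intComp]

/-- `↓` is functorial on Int(Rel). -/
theorem down_functorial (Ap Am Bp Bm Cp Cm : Type)
    (R : Rel' (Ap ⊕ Bm) (Bp ⊕ Am)) (S : Rel' (Bp ⊕ Cm) (Cp ⊕ Bm)) :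
    downM (IntComp S R) = IntComp (downM S) (downM R) ∧
    downM (IdInt Ap Am) = IdInt (Ap ⊕ Unit) (Am ⊕ Unit) := by
  simpa only [downM_eq_intSum] using down_functorial_general Unit Unit R S

end IntRel
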